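/- Let q = 2^k with k a positive integer, and let B(X) = X^6 + X^4 + X^2 + X + 1 ∈ F_2[X] (this is B_2 from Table 1 with (Q,R,S) = (1,2,2), σ = (1,-1,-1), since in characteristic 2 signs vanish: B_2(X) = X^{Q+R} + X^{Q+S} - X^{R+S} - X^Q + 1 = X^3 + X^3 + X^4 + X + 1, i.e. X^4 + X + 1 when the two X^3 terms cancel). Precisely: with (Q,R,S)=(1,2,2) we get B_2(X) = X^3 + X^3 + X^4 + X + 1 = X^4 + X + 1 over F_2. Then f(X) = X^5 · (X^{4(q-1)} + X^{q-1} + 1) permutes F_{q^2} if and only if gcd(5, q-1) = 1 and gcd(5, q + e) = 1, where e ∈ {1,-1} with q ≡ e (mod 3). -/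

import Mathlib

/-!
Let `σ` be the involution `x ↦ x ^ q` of `F` and `ω` a primitive cube root of unity, so that
`f x = x ^ 5 + x ^ 4 * σ x + x * σ x ^ 4`. In characteristic two the linearized binomials
`L c x = σ x + c * x` satisfy `L (ω ^ 2) (f x) = L ω x ^ 5`. If `σ ω = ω`, both binomials are
bijective, so `f` permutes `F` exactly when `x ↦ x ^ 5` does. If `σ ω = ω ^ 2`, then
`x = L ω x + L (ω ^ 2) x` splits `F` into two lines over the fixed field of `σ`. On each line `f` is
the fifth power map into the other one, so `f` is injective exactly when `x ↦ x ^ 5` is injective on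
the fixed field.
-/

section PowersAndRootsOfUnity

theorem injOn_pow_of_fixed_pow_eq_one {G S : Type*} [CommGroupWithZero G] [FunLike S G G]
    [MonoidWithZeroHomClass S G G] {σ : S} {n : ℕ} (hn : n ≠ 0)
    (h : ∀ w, σ w = w → w ^ n = 1 → w = 1) (c : G) :
    Set.InjOn (fun a => a ^ n) {a | σ a = c * a} := by
  intro a (ha : σ a = c * a) b (hb : σ b = c * b) (hab : a ^ n = b ^ n)
  rcases eq_or_ne b 0 with rfl | hb0
  · exact (pow_eq_zero_iff hn).mp (hab.trans (zero_pow hn))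
  have hc : c ≠ 0 := by
    rintro rfl
    exact hb0 ((map_eq_zero σ).mp (hb.trans (zero_mul b)))
  have ratio_fixed : σ (a / b) = a / b := by rw [map_div₀, ha, hb, mul_div_mul_left _ _ hc]
  have ratio_pow : (a / b) ^ n = 1 := by rw [div_pow, hab, div_self (pow_ne_zero n hb0)]
  exact (div_eq_one_iff_eq hb0).mp (h _ ratio_fixed ratio_pow)

theorem sq_add_self_add_one_eq_zero {R : Type*} [CommRing R] [IsDomain R] {ω : R}
    (hω : IsPrimitiveRoot ω 3) : ω ^ 2 + ω + 1 = 0 := by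
  have h := hω.geom_sum_eq_zero (by norm_num)
  simp only [Finset.sum_range_succ, Finset.sum_range_zero] at h
  linear_combination h

variable {F : Type*} [Field F]

theorem exists_isPrimitiveRoot_of_dvd_card_sub_one [Fintype F] {n : ℕ}
    (hn : n ∣ Fintype.card F - 1) : ∃ ζ : F, IsPrimitiveRoot ζ n := by
  classical
  obtain ⟨g, hg⟩ := IsCyclic.exists_ofOrder_eq_natCard (α := Fˣ)
  rw [Nat.card_eq_fintype_card, Fintype.card_units] at hg
  have hg_prim : IsPrimitiveRoot (g : F) (Fintype.card F - 1) :=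
    IsPrimitiveRoot.coe_units_iff.mpr (hg ▸ IsPrimitiveRoot.orderOf g)
  obtain ⟨d, hd⟩ := hn
  exact ⟨_, hg_prim.pow (Nat.sub_pos_of_lt Fintype.one_lt_card) (hd.trans (mul_comm n d))⟩

theorem forall_pow_eq_one_iff_coprime [Fintype F] {m n : ℕ} (hn : n ∣ Fintype.card F - 1) :
    (∀ w : F, w ^ n = 1 → w ^ m = 1 → w = 1) ↔ m.Coprime n := by
  constructor
  · intro h
    obtain ⟨ζ, hζ⟩ := exists_isPrimitiveRoot_of_dvd_card_sub_one (F := F)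
      ((Nat.gcd_dvd_right m n).trans hn)
    obtain ⟨hm1, hn1⟩ := pow_gcd_eq_one.mp hζ.pow_eq_one
    have hζ1 : ζ = 1 := h ζ hn1 hm1
    exact hζ.unique (hζ1 ▸ IsPrimitiveRoot.one)
  · intro hmn w hwn hwm
    have hw : w ^ m.gcd n = 1 := pow_gcd_eq_one.mpr ⟨hwm, hwn⟩
    rwa [hmn, pow_one] at hw

theorem pow_bijective_iff_coprime [Fintype F] {m : ℕ} (hm : m ≠ 0) :
    Function.Bijective (fun x : F => x ^ m) ↔ m.Coprime (Fintype.card F - 1) := by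
  rw [← Finite.injective_iff_bijective, ← forall_pow_eq_one_iff_coprime (F := F) dvd_rfl]
  constructor
  · intro h w _ hw
    exact h (hw.trans (one_pow m).symm)
  · intro h a b hab
    refine injOn_pow_of_fixed_pow_eq_one (σ := RingHom.id F) hm (fun w _ hw => ?_) 1
      (one_mul a).symm (one_mul b).symm hab
    have hw0 : w ≠ 0 := (IsUnit.of_pow_eq_one hw hm).ne_zero
    exact h w (FiniteField.pow_card_sub_one_eq_one w hw0) hw

theorem forall_iterateFrobenius_fixed_pow_eq_one_iff_coprime [Fintype F] {p k m : ℕ} [ExpChar F p]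
    (hm : m ≠ 0) (hdvd : p ^ k - 1 ∣ Fintype.card F - 1) :
    (∀ w : F, iterateFrobenius F p k w = w → w ^ m = 1 → w = 1) ↔ m.Coprime (p ^ k - 1) := by
  rw [← forall_pow_eq_one_iff_coprime hdvd]
  refine forall_congr' fun w => forall_comm.trans (Iff.trans ?_ forall_comm)
  refine forall_congr' fun hw => imp_congr_left ?_
  have hw0 : w ≠ 0 := (IsUnit.of_pow_eq_one hw hm).ne_zero
  have hpk : 0 < p ^ k := pow_pos (expChar_pos F p) k
  rw [iterateFrobenius_def, ← mul_eq_right₀ hw0, pow_sub_one_mul hpk.ne']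

theorem iterateFrobenius_involutive [Fintype F] {p k : ℕ} [ExpChar F p]
    (hF : Fintype.card F = (p ^ k) ^ 2) : Function.Involutive (iterateFrobenius F p k) := by
  intro x
  rw [iterateFrobenius_def, iterateFrobenius_def, ← pow_mul, ← sq, ← hF, FiniteField.pow_card]

end PowersAndRootsOfUnity

section LinearizedBinomial

/-- The linearized binomial `X ^ q + c * X`, with the `q`-power Frobenius replaced by an arbitrary
endomorphism `σ`. -/
def linearizedBinomial {R : Type*} [Semiring R] (σ : R →+* R) (c x : R) : R :=
  σ x + c * x

theorem map_linearizedBinomial_of_mul_eq_one {R : Type*} [CommSemiring R] {σ : R →+* R}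
    (hσ : Function.Involutive σ) {c : R} (hc : σ c * c = 1) (x : R) :
    σ (linearizedBinomial σ c x) = σ c * linearizedBinomial σ c x := by
  simp only [linearizedBinomial, map_add, map_mul, hσ x]
  rw [mul_add, ← mul_assoc, hc, one_mul, add_comm]

theorem linearizedBinomial_bijective {F : Type*} [Field F] {σ : F →+* F}
    (hσ : Function.Involutive σ) {c : F} (hc : σ c * c ≠ 1) :
    Function.Bijective (linearizedBinomial σ c) := by
  set d := σ c * c - 1 with hd
  have d_ne_zero : d ≠ 0 := sub_ne_zero.mpr hc
  have map_d : σ d = d := by rw [hd, map_sub, map_mul, map_one, hσ c, mul_comm]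
  have eliminate (x : F) :
      σ c * linearizedBinomial σ c x - σ (linearizedBinomial σ c x) = d * x := by
    simp only [linearizedBinomial, map_add, map_mul, hσ x, hd]
    ring
  constructor
  · intro x y hxy
    exact mul_left_cancel₀ d_ne_zero (by rw [← eliminate x, ← eliminate y, hxy])
  · intro y
    refine ⟨(σ c * y - σ y) / d, ?_⟩
    simp only [linearizedBinomial, map_div₀, map_sub, map_mul, hσ y, hσ c, map_d]
    rw [← mul_div_assoc, ← add_div, div_eq_iff d_ne_zero]
    ring

end LinearizedBinomial

section TwistedQuintic

/-- The polynomial map `X ^ 5 * B (X ^ (q - 1))` for `B = X ^ 4 + X + 1`, with the `q`-power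
Frobenius replaced by an arbitrary endomorphism `σ`. It is multiplied out so that no `σ x / x`
occurs. -/
def twistedQuintic {R : Type*} [Semiring R] (σ : R →+* R) (x : R) : R :=
  x ^ 5 + x ^ 4 * σ x + x * σ x ^ 4

theorem twistedQuintic_iterateFrobenius {R : Type*} [CommSemiring R] (p k : ℕ) [ExpChar R p]
    (x : R) :
    twistedQuintic (iterateFrobenius R p k) x =
      x ^ 5 * ((x ^ (p ^ k - 1)) ^ 4 + x ^ (p ^ k - 1) + 1) := by
  have hpk : p ^ k ≠ 0 := (pow_pos (expChar_pos R p) k).ne'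
  rw [twistedQuintic, iterateFrobenius_def, ← mul_pow_sub_one hpk]
  ring

section CommRing

variable {R : Type*} [CommRing R] [CharP R 2] {σ : R →+* R}

theorem twistedQuintic_of_fixed {w : R} (hw : σ w = w) : twistedQuintic σ w = w ^ 5 := by
  rw [twistedQuintic, hw]
  linear_combination w ^ 5 * CharTwo.two_eq_zero (R := R)

variable [IsDomain R] {ω : R}

theorem linearizedBinomial_add_linearizedBinomial_sq (hω : IsPrimitiveRoot ω 3) (x : R) :
    linearizedBinomial σ ω x + linearizedBinomial σ (ω ^ 2) x = x := by
  rw [linearizedBinomial, linearizedBinomial]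
  linear_combination x * sq_add_self_add_one_eq_zero hω + (σ x - x) * CharTwo.two_eq_zero (R := R)

theorem linearizedBinomial_sq_twistedQuintic (hσ : Function.Involutive σ)
    (hω : IsPrimitiveRoot ω 3) (x : R) :
    linearizedBinomial σ (ω ^ 2) (twistedQuintic σ x) = linearizedBinomial σ ω x ^ 5 := by
  simp only [linearizedBinomial, twistedQuintic, map_add, map_mul, map_pow, hσ x]
  set s := σ x
  have h2 : (2 : R) = 0 := CharTwo.two_eq_zero
  -- Modulo `2` and `ω ^ 3 = 1`, the fifth power is
  -- `s ^ 5 + ω * s ^ 4 * x + ω * s * x ^ 4 + ω ^ 2 * x ^ 5`, and `ω = 1 + ω ^ 2`.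
  linear_combination (s ^ 4 * x + s * x ^ 4) * sq_add_self_add_one_eq_zero hω
    - (5 * ω * s * x ^ 4 + ω ^ 2 * x ^ 5) * hω.pow_eq_one
    - (3 * ω * (s ^ 4 * x + s * x ^ 4) + 5 * ω ^ 2 * s ^ 3 * x ^ 2 + 5 * ω ^ 3 * s ^ 2 * x ^ 3) * h2

theorem linearizedBinomial_twistedQuintic (hσ : Function.Involutive σ)
    (hω : IsPrimitiveRoot ω 3) (x : R) :
    linearizedBinomial σ ω (twistedQuintic σ x) = linearizedBinomial σ (ω ^ 2) x ^ 5 := by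
  have hω4 : (ω ^ 2) ^ 2 = ω := by linear_combination ω * hω.pow_eq_one
  rw [← linearizedBinomial_sq_twistedQuintic hσ (hω.pow_of_coprime 2 (by decide)), hω4]

end CommRing

section Field

variable {F : Type*} [Field F] [CharP F 2] {σ : F →+* F} {ω : F}

theorem twistedQuintic_bijective_iff_of_map_eq_self (hσ : Function.Involutive σ)
    (hω : IsPrimitiveRoot ω 3) (hσω : σ ω = ω) :
    Function.Bijective (twistedQuintic σ) ↔ Function.Bijective (fun x : F => x ^ 5) := by
  have bij : Function.Bijective (linearizedBinomial σ ω) := by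
    refine linearizedBinomial_bijective hσ ?_
    rw [hσω, ← sq]
    exact hω.pow_ne_one_of_pos_of_lt (by decide) (by decide)
  have bij_sq : Function.Bijective (linearizedBinomial σ (ω ^ 2)) := by
    refine linearizedBinomial_bijective hσ ?_
    rw [map_pow, hσω, ← pow_add, pow_succ, hω.pow_eq_one, one_mul]
    exact hω.ne_one (by decide)
  have conj : linearizedBinomial σ (ω ^ 2) ∘ twistedQuintic σ =
      (fun x => x ^ 5) ∘ linearizedBinomial σ ω :=
    funext (linearizedBinomial_sq_twistedQuintic hσ hω)
  rw [← Function.Bijective.of_comp_iff' bij_sq, conj, Function.Bijective.of_comp_iff _ bij]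

theorem twistedQuintic_injective_iff_of_map_eq_sq (hσ : Function.Involutive σ)
    (hω : IsPrimitiveRoot ω 3) (hσω : σ ω = ω ^ 2) :
    Function.Injective (twistedQuintic σ) ↔ ∀ w, σ w = w → w ^ 5 = 1 → w = 1 := by
  constructor
  · intro h w hw hw5
    apply h
    rw [twistedQuintic_of_fixed hw, twistedQuintic_of_fixed (map_one σ), hw5, one_pow]
  · intro h x y hxy
    have norm_ω : σ ω * ω = 1 := by rw [hσω, ← pow_succ, hω.pow_eq_one]
    have norm_ω_sq : σ (ω ^ 2) * ω ^ 2 = 1 := by rw [map_pow, ← mul_pow, norm_ω, one_pow]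
    have hu : linearizedBinomial σ ω x = linearizedBinomial σ ω y := by
      refine injOn_pow_of_fixed_pow_eq_one (by decide) h (σ ω)
        (map_linearizedBinomial_of_mul_eq_one hσ norm_ω x)
        (map_linearizedBinomial_of_mul_eq_one hσ norm_ω y) ?_
      simp only [← linearizedBinomial_sq_twistedQuintic hσ hω, hxy]
    have hv : linearizedBinomial σ (ω ^ 2) x = linearizedBinomial σ (ω ^ 2) y := by
      refine injOn_pow_of_fixed_pow_eq_one (by decide) h (σ (ω ^ 2))
        (map_linearizedBinomial_of_mul_eq_one hσ norm_ω_sq x)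
        (map_linearizedBinomial_of_mul_eq_one hσ norm_ω_sq y) ?_
      simp only [← linearizedBinomial_twistedQuintic hσ hω, hxy]
    rw [← linearizedBinomial_add_linearizedBinomial_sq (σ := σ) hω x, hu, hv,
      linearizedBinomial_add_linearizedBinomial_sq hω y]

end Field

end TwistedQuintic

section FiniteField

theorem sq_sub_one_eq_succ_mul_pred (n : ℕ) : n ^ 2 - 1 = (n + 1) * (n - 1) := by
  simpa only [one_pow] using Nat.sq_sub_sq n 1

variable {F : Type*} [Field F] [Fintype F]

theorem exists_isPrimitiveRoot_three {n : ℕ} (hF : Fintype.card F = n ^ 2) (hn : n % 3 ≠ 0) :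
    ∃ ω : F, IsPrimitiveRoot ω 3 := by
  refine exists_isPrimitiveRoot_of_dvd_card_sub_one ?_
  rw [hF, sq_sub_one_eq_succ_mul_pred, Nat.prime_three.dvd_mul]
  omega

variable [CharP F 2] {k : ℕ}

theorem twistedQuintic_iterateFrobenius_bijective_iff_of_mod_three_eq_one
    (hF : Fintype.card F = (2 ^ k) ^ 2) (hmod : 2 ^ k % 3 = 1) :
    Function.Bijective (twistedQuintic (iterateFrobenius F 2 k)) ↔
      Nat.Coprime 5 (2 ^ k - 1) ∧ Nat.Coprime 5 (2 ^ k + 1) := by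
  obtain ⟨ω, hω⟩ := exists_isPrimitiveRoot_three hF (by omega)
  have map_ω : iterateFrobenius F 2 k ω = ω := by
    rw [iterateFrobenius_def, pow_eq_pow_mod _ hω.pow_eq_one, hmod, pow_one]
  rw [twistedQuintic_bijective_iff_of_map_eq_self (iterateFrobenius_involutive hF) hω map_ω,
    pow_bijective_iff_coprime (by decide), hF, sq_sub_one_eq_succ_mul_pred,
    Nat.coprime_mul_iff_right, and_comm]

theorem twistedQuintic_iterateFrobenius_bijective_iff_of_mod_three_eq_two
    (hF : Fintype.card F = (2 ^ k) ^ 2) (hmod : 2 ^ k % 3 = 2) :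
    Function.Bijective (twistedQuintic (iterateFrobenius F 2 k)) ↔ Nat.Coprime 5 (2 ^ k - 1) := by
  obtain ⟨ω, hω⟩ := exists_isPrimitiveRoot_three hF (by omega)
  have map_ω : iterateFrobenius F 2 k ω = ω ^ 2 := by
    rw [iterateFrobenius_def, pow_eq_pow_mod _ hω.pow_eq_one, hmod]
  rw [← Finite.injective_iff_bijective,
    twistedQuintic_injective_iff_of_map_eq_sq (iterateFrobenius_involutive hF) hω map_ω]
  refine forall_iterateFrobenius_fixed_pow_eq_one_iff_coprime (by decide) ?_
  rw [hF, sq_sub_one_eq_succ_mul_pred]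
  exact dvd_mul_left _ _

end FiniteField

/-- Statement 13: for `q = 2^k`, the polynomial
`f(X) = X^5 (X^{4(q-1)} + X^{q-1} + 1)` permutes `F_{q^2}` iff
`gcd(5, q-1) = 1` and `gcd(5, q+e) = 1`, where `e ∈ {1,-1}` with
`q ≡ e (mod 3)`. -/
theorem stmt13 (k q : ℕ) (hk : 0 < k) (hq : q = 2 ^ k)
    (F : Type*) [Field F] [Fintype F] (hF : Fintype.card F = q ^ 2)
    (e : ℤ) (he : e = 1 ∨ e = -1) (hqe : (q : ℤ) % 3 = e % 3) :
    Function.Bijective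
        (fun x : F => x ^ 5 * ((x ^ (q - 1)) ^ 4 + x ^ (q - 1) + 1)) ↔
      (Nat.gcd 5 (q - 1) = 1 ∧ Int.gcd 5 ((q : ℤ) + e) = 1) := by
  have residues : q % 3 = 1 ∧ e = 1 ∨ q % 3 = 2 ∧ e = -1 := by omega
  subst hq
  have : CharP F 2 := charP_of_card_eq_prime_pow (hF.trans (pow_mul 2 k 2).symm)
  simp only [← twistedQuintic_iterateFrobenius]
  rcases residues with ⟨hmod, rfl⟩ | ⟨hmod, rfl⟩
  · rw [twistedQuintic_iterateFrobenius_bijective_iff_of_mod_three_eq_one hF hmod]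
    exact_mod_cast Iff.rfl
  · have cast_sub_one : ((2 ^ k : ℕ) : ℤ) + -1 = (2 ^ k - 1 : ℕ) := by
      rw [Nat.cast_sub Nat.one_le_two_pow, Nat.cast_one, sub_eq_add_neg]
    rw [twistedQuintic_iterateFrobenius_bijective_iff_of_mod_three_eq_two hF hmod, cast_sub_one]
    exact and_self_iff.symm
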